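/- arXiv:2501.04853 — 3 statements merged into one kernel-verified Lean document; each statement's English description precedes it below -/
import Mathlib

section
/- (Partial identification under monotone treatment response.) Suppose Assumption DID holds for each path d in {(1,1),(0,1),(1,0)} relative to d' = (0,0), that P(D = e | X) > 0 a.s. for every e in {0,1}^2, that E[Y2(1,0) − Y2(0,0) | D = (1,0), X] ≥ 0 a.s. (monotone treatment response), and that there is a real constant Y_min with Y2(e) ≥ Y_min a.s. for every e in {0,1}^2. Then, a.s., E[ΔY | D2 = 1, X] − E[ΔY | D2 = 0, X] ≤ E[Y2(1,1) − Y2(0,0) | D = (1,1), X] · P(D1 = 1 | D2 = 1, X) + E[Y2(0,1) − Y2(0,0) | D = (0,1), X] · P(D1 = 0 | D2 = 1, X) ≤ E[ΔY | D2 = 1, X] − E[ΔY | D2 = 0, X] + E[Y2 | D2 = 0, X] − Y_min. -/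
open MeasureTheory Set
open scoped Classical

noncomputable section

namespace DIDMissing

variable {Ω : Type*} {𝓧 : Type*}

/-- Real-valued indicator of a set. -/
def ind (A : Set Ω) : Ω → ℝ := A.indicator fun _ => (1 : ℝ)

/-- All treatment paths `{0,1}²` (coded as reals). -/
def allPaths : Set (ℝ × ℝ) := {(0, 0), (0, 1), (1, 0), (1, 1)}

/-- The three treated paths `{(1,1), (0,1), (1,0)}`. -/
def threePaths : Set (ℝ × ℝ) := {(1, 1), (0, 1), (1, 0)}

/-- The event `{D = d}` for a treatment path `d = (d₁, d₂)`. -/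
def evD (D1 D2 : Ω → ℝ) (d : ℝ × ℝ) : Set Ω := {ω | D1 ω = d.1 ∧ D2 ω = d.2}

/-- The event `{D₂ = b}`. -/
def evD2 (D2 : Ω → ℝ) (b : ℝ) : Set Ω := {ω | D2 ω = b}

/-- `g` is a (measurable-in-the-covariate) version of the conditional mean `E[Z ∣ A, X]`:
for every bounded measurable `h`, `E[1_A · Z · h(X)] = E[1_A · g(X) · h(X)]`. -/
def IsCondMeanGiven [MeasurableSpace Ω] [MeasurableSpace 𝓧] (P : Measure Ω) (X : Ω → 𝓧)
    (A : Set Ω) (Z : Ω → ℝ) (g : 𝓧 → ℝ) : Prop :=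
  Measurable g ∧
    ∀ h : 𝓧 → ℝ, Measurable h → (∃ C, ∀ x, |h x| ≤ C) →
      ∫ ω, ind A ω * Z ω * h (X ω) ∂P = ∫ ω, ind A ω * g (X ω) * h (X ω) ∂P

/-- Assumption DID for a path `d` relative to `d' = (0,0)`:
(i) no anticipation, `E[Y₀(d) ∣ D = d, X] = E[Y₀(0,0) ∣ D = d, X]` a.s., stated in the
version-free integral form; and (ii) conditional parallel trends, stated as the existence
of a common version of `E[Y₂(0,0) − Y₀(0,0) ∣ X]` and `E[Y₂(0,0) − Y₀(0,0) ∣ D = d, X]`. -/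
def DID [MeasurableSpace Ω] [MeasurableSpace 𝓧] (P : Measure Ω) (X : Ω → 𝓧)
    (D1 D2 : Ω → ℝ) (Y0p Y2p : ℝ × ℝ → Ω → ℝ) (d : ℝ × ℝ) : Prop :=
  (∀ h : 𝓧 → ℝ, Measurable h → (∃ C, ∀ x, |h x| ≤ C) →
      ∫ ω, ind (evD D1 D2 d) ω * Y0p d ω * h (X ω) ∂P
        = ∫ ω, ind (evD D1 D2 d) ω * Y0p (0, 0) ω * h (X ω) ∂P) ∧
  (∃ tr : 𝓧 → ℝ,
      IsCondMeanGiven P X Set.univ (fun ω => Y2p (0, 0) ω - Y0p (0, 0) ω) tr ∧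
      IsCondMeanGiven P X (evD D1 D2 d) (fun ω => Y2p (0, 0) ω - Y0p (0, 0) ω) tr)

/-- Assumption MAR: `S ⟂ (D₁, ΔY) ∣ (D₂, X)`, where `q d₂` is a version of the
missing-data probability `P(S = 1 ∣ D₂ = d₂, X)`, which is `(0,1]`-valued a.s. -/
def MAR [MeasurableSpace Ω] [MeasurableSpace 𝓧] (P : Measure Ω) (X : Ω → 𝓧)
    (D1 D2 S Y0 Y2 : Ω → ℝ) (q : ℝ → 𝓧 → ℝ) : Prop :=
  (∀ d2 ∈ ({0, 1} : Set ℝ), IsCondMeanGiven P X (evD2 D2 d2) S (q d2)) ∧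
  (∀ d2 ∈ ({0, 1} : Set ℝ), ∀ᵐ ω ∂P, 0 < q d2 (X ω) ∧ q d2 (X ω) ≤ 1) ∧
  (∀ d2 ∈ ({0, 1} : Set ℝ), ∀ f : ℝ × ℝ → ℝ, Measurable f → (∃ C, ∀ p, |f p| ≤ C) →
      ∀ h : 𝓧 → ℝ, Measurable h → (∃ C, ∀ x, |h x| ≤ C) →
        ∫ ω, ind (evD2 D2 d2) ω * S ω * f (D1 ω, Y2 ω - Y0 ω) * h (X ω) ∂P
          = ∫ ω, ind (evD2 D2 d2) ω * q d2 (X ω) * f (D1 ω, Y2 ω - Y0 ω) * h (X ω) ∂P)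

/-- The path-dependent ATT `τ_{d,(0,0)} = E[Y₂(d) − Y₂(0,0) ∣ D = d]`. -/
def tau [MeasurableSpace Ω] (P : Measure Ω) (D1 D2 : Ω → ℝ)
    (Y2p : ℝ × ℝ → Ω → ℝ) (d : ℝ × ℝ) : ℝ :=
  (P (evD D1 D2 d)).toReal⁻¹ * ∫ ω in evD D1 D2 d, (Y2p d ω - Y2p (0, 0) ω) ∂P


lemma ind_meas [MeasurableSpace Ω] {A : Set Ω} (hA : MeasurableSet A) : Measurable (ind A) :=
  measurable_const.indicator hA

lemma ind_abs (A : Set Ω) (ω : Ω) : |ind A ω| ≤ 1 := by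
  by_cases h : ω ∈ A <;> simp [ind, h]

lemma ind_nonneg (A : Set Ω) (ω : Ω) : 0 ≤ ind A ω := by
  by_cases h : ω ∈ A <;> simp [ind, h]

lemma ind_int [MeasurableSpace Ω] {P : Measure Ω} {A : Set Ω} (hA : MeasurableSet A)
    {Z : Ω → ℝ} (hZ : Integrable Z P) : Integrable (fun ω => ind A ω * Z ω) P :=
  hZ.bdd_mul (c := 1) (ind_meas hA).aestronglyMeasurable
    (Filter.Eventually.of_forall fun ω => by simpa using ind_abs A ω)

lemma key_int [MeasurableSpace Ω] [MeasurableSpace 𝓧] {P : Measure Ω} [IsProbabilityMeasure P]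
    {X : Ω → 𝓧} (hX : Measurable X) {A : Set Ω} (hA : MeasurableSet A)
    {Z : Ω → ℝ} (hZ : Integrable Z P) {g : 𝓧 → ℝ} (hg : IsCondMeanGiven P X A Z g) :
    Integrable (fun ω => ind A ω * g (X ω)) P := by
  obtain ⟨hgm, hg⟩ := hg
  have hm : Measurable (fun ω => ind A ω * g (X ω)) := (ind_meas hA).mul (hgm.comp hX)
  let B : ℕ → Set 𝓧 := fun n => {x | |g x| ≤ n}
  have hB : ∀ n, MeasurableSet (B n) := fun n => measurableSet_le hgm.abs measurable_const
  let F : ℕ → Ω → ℝ := fun n ω => ind A ω * (ind (B n) (X ω) * g (X ω))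
  have hFm : ∀ n, Measurable (F n) := fun n =>
    (ind_meas hA).mul (((ind_meas (hB n)).comp hX).mul (hgm.comp hX))
  have hbd : ∀ n ω, |F n ω| ≤ n := by
    intro n ω
    simp only [F, abs_mul]
    have h1 : |ind (B n) (X ω)| * |g (X ω)| ≤ n := by
      by_cases h : X ω ∈ B n
      · have h2 : |g (X ω)| ≤ n := h
        simpa [ind, h] using h2
      · simp [ind, h]
    have h3 := ind_abs A ω
    have : 0 ≤ |ind (B n) (X ω)| * |g (X ω)| := by positivity
    nlinarith [abs_nonneg (ind A ω)]
  have hFi : ∀ n, Integrable (F n) P := fun n =>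
    Integrable.of_bound (hFm n).aestronglyMeasurable n
      (Filter.Eventually.of_forall fun ω => by simpa using hbd n ω)
  have hle : ∀ n, ∫ ω, ‖F n ω‖ ∂P ≤ ∫ ω, ‖Z ω‖ ∂P := by
    intro n
    let h : 𝓧 → ℝ := fun x => ind (B n) x * (if 0 ≤ g x then 1 else -1)
    have hh : Measurable h := (ind_meas (hB n)).mul
      (Measurable.ite (measurableSet_le measurable_const hgm) measurable_const measurable_const)
    have hh1 : ∀ x, |h x| ≤ 1 := by
      intro x
      simp only [h, abs_mul]
      have := ind_abs (B n) x
      split_ifs <;> simpa using this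
    have e := hg h hh ⟨1, hh1⟩
    have e1 : ∀ ω, ‖F n ω‖ = ind A ω * g (X ω) * h (X ω) := by
      intro ω
      simp only [F, h, Real.norm_eq_abs, abs_mul, abs_of_nonneg (ind_nonneg _ _)]
      split_ifs with h0
      · rw [abs_of_nonneg h0]; ring
      · rw [abs_of_neg (not_le.mp h0)]; ring
    rw [integral_congr_ae (Filter.Eventually.of_forall e1), ← e]
    have hint : Integrable (fun ω => ind A ω * Z ω * h (X ω)) P :=
      (ind_int hA hZ).mul_bdd (c := 1) (hh.comp hX).aestronglyMeasurable
        (Filter.Eventually.of_forall fun ω => by simpa using hh1 (X ω))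
    refine integral_mono hint hZ.norm fun ω => ?_
    have a1 := ind_abs A ω
    have a2 := hh1 (X ω)
    calc ind A ω * Z ω * h (X ω) ≤ |ind A ω * Z ω * h (X ω)| := le_abs_self _
      _ = |ind A ω| * |Z ω| * |h (X ω)| := by rw [abs_mul, abs_mul]
      _ ≤ 1 * |Z ω| * 1 := by gcongr
      _ = ‖Z ω‖ := by simp
  have hF : ∀ n, F n = (X ⁻¹' B n).indicator (fun ω => ind A ω * g (X ω)) := by
    intro n; ext ω
    by_cases hω : X ω ∈ B n
    · simp [F, ind, hω]
    · simp [F, ind, hω]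
  have hcov : AECover P Filter.atTop (fun n => X ⁻¹' B n) := by
    refine ⟨Filter.Eventually.of_forall fun ω => ?_, fun n => hX (hB n)⟩
    obtain ⟨N, hN⟩ := exists_nat_ge |g (X ω)|
    filter_upwards [Filter.eventually_ge_atTop N] with n hn
    exact hN.trans (by exact_mod_cast hn)
  refine hcov.integrable_of_integral_norm_bounded (∫ ω, ‖Z ω‖ ∂P) (fun n => ?_)
    (Filter.Eventually.of_forall fun n => ?_)
  · rw [← integrable_indicator_iff (hX (hB n)), ← hF]; exact hFi n
  · rw [← integral_indicator (hX (hB n))]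
    refine le_trans (le_of_eq ?_) (hle n)
    congr 1; ext ω
    rw [hF n, ← norm_indicator_eq_indicator_norm]

lemma congr_cond [MeasurableSpace Ω] [m𝓧 : MeasurableSpace 𝓧] {P : Measure Ω}
    [IsProbabilityMeasure P]
    {X : Ω → 𝓧} (hX : Measurable X) {U V : Ω → ℝ} (hU : Integrable U P) (hV : Integrable V P)
    (h : ∀ h : 𝓧 → ℝ, Measurable h → (∃ C, ∀ x, |h x| ≤ C) →
      ∫ ω, U ω * h (X ω) ∂P = ∫ ω, V ω * h (X ω) ∂P) :
    P[U | m𝓧.comap X] =ᵐ[P] P[V | m𝓧.comap X] := by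
  have hm : m𝓧.comap X ≤ ‹MeasurableSpace Ω› := hX.comap_le
  refine (ae_eq_condExp_of_forall_setIntegral_eq hm hV (fun s _ _ => integrable_condExp.integrableOn)
    ?_ stronglyMeasurable_condExp.aestronglyMeasurable)
  intro s hs _
  rw [setIntegral_condExp hm hU hs]
  obtain ⟨B, hB, rfl⟩ := hs
  have e := h (ind B) (ind_meas hB) ⟨1, ind_abs B⟩
  rw [← integral_indicator (hX hB), ← integral_indicator (hX hB)]
  have t : ∀ W : Ω → ℝ, (X ⁻¹' B).indicator W = fun ω => W ω * ind B (X ω) := by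
    intro W; ext ω
    by_cases hω : X ω ∈ B <;> simp [ind, hω]
  rw [t, t, e]

lemma key [MeasurableSpace Ω] [m𝓧 : MeasurableSpace 𝓧] {P : Measure Ω} [IsProbabilityMeasure P]
    {X : Ω → 𝓧} (hX : Measurable X) {A : Set Ω} (hA : MeasurableSet A)
    {Z : Ω → ℝ} (hZ : Integrable Z P) {g : 𝓧 → ℝ} (hg : IsCondMeanGiven P X A Z g) :
    P[fun ω => ind A ω * Z ω | m𝓧.comap X] =ᵐ[P]
      fun ω => (P[ind A | m𝓧.comap X]) ω * g (X ω) := by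
  have hi := key_int hX hA hZ hg
  have h1 : P[fun ω => ind A ω * g (X ω) | m𝓧.comap X] =ᵐ[P]
      fun ω => (P[ind A | m𝓧.comap X]) ω * g (X ω) :=
    condExp_mul_of_stronglyMeasurable_right (f := ind A) (g := fun ω => g (X ω))
      (hg.1.comp (comap_measurable X)).stronglyMeasurable hi
      (by simpa using ind_int hA (integrable_const (1:ℝ)))
  refine Filter.EventuallyEq.trans ?_ h1
  exact congr_cond hX (ind_int hA hZ) hi hg.2

/-- Partial identification of a convex combination of PDATTs under monotone treatment
response and a lower bound on outcomes. -/
theorem statement_13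
    [MeasurableSpace Ω] [m𝓧 : MeasurableSpace 𝓧]
    (P : Measure Ω) [IsProbabilityMeasure P]
    (X : Ω → 𝓧) (hX : Measurable X)
    (Y0 Y2 D1 D2 : Ω → ℝ)
    (hY0 : Measurable Y0) (hY2 : Measurable Y2)
    (hD1 : Measurable D1) (hD2 : Measurable D2)
    (hY0i : Integrable Y0 P) (hY2i : Integrable Y2 P)
    (hD1v : ∀ ω, D1 ω = 0 ∨ D1 ω = 1) (hD2v : ∀ ω, D2 ω = 0 ∨ D2 ω = 1)
    (Y0p Y2p : ℝ × ℝ → Ω → ℝ)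
    (hY0p : ∀ e ∈ allPaths, Measurable (Y0p e) ∧ Integrable (Y0p e) P)
    (hY2p : ∀ e ∈ allPaths, Measurable (Y2p e) ∧ Integrable (Y2p e) P)
    (hcons0 : ∀ ω, Y0 ω = Y0p (D1 ω, D2 ω) ω)
    (hcons2 : ∀ ω, Y2 ω = Y2p (D1 ω, D2 ω) ω)
    (hDID : ∀ d ∈ threePaths, DID P X D1 D2 Y0p Y2p d)
    (pP : ℝ × ℝ → 𝓧 → ℝ)
    (hpP : ∀ e ∈ allPaths, IsCondMeanGiven P X Set.univ (ind (evD D1 D2 e)) (pP e))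
    (hpPpos : ∀ e ∈ allPaths, ∀ᵐ ω ∂P, 0 < pP e (X ω))
    (g10 : 𝓧 → ℝ)
    (hg10 : IsCondMeanGiven P X (evD D1 D2 (1, 0))
        (fun ω => Y2p (1, 0) ω - Y2p (0, 0) ω) g10)
    (hMTR : ∀ᵐ ω ∂P, 0 ≤ g10 (X ω))
    (Ymin : ℝ) (hYmin : ∀ e ∈ allPaths, ∀ᵐ ω ∂P, Ymin ≤ Y2p e ω)
    (m1 m0 : 𝓧 → ℝ)
    (hm1 : IsCondMeanGiven P X (evD2 D2 1) (fun ω => Y2 ω - Y0 ω) m1)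
    (hm0 : IsCondMeanGiven P X (evD2 D2 0) (fun ω => Y2 ω - Y0 ω) m0)
    (g11 g01 : 𝓧 → ℝ)
    (hg11 : IsCondMeanGiven P X (evD D1 D2 (1, 1))
        (fun ω => Y2p (1, 1) ω - Y2p (0, 0) ω) g11)
    (hg01 : IsCondMeanGiven P X (evD D1 D2 (0, 1))
        (fun ω => Y2p (0, 1) ω - Y2p (0, 0) ω) g01)
    (p11 p01 : 𝓧 → ℝ)
    (hp11 : IsCondMeanGiven P X (evD2 D2 1) (ind {ω | D1 ω = 1}) p11)
    (hp01 : IsCondMeanGiven P X (evD2 D2 1) (ind {ω | D1 ω = 0}) p01)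
    (mY20 : 𝓧 → ℝ)
    (hmY20 : IsCondMeanGiven P X (evD2 D2 0) Y2 mY20) :
    ∀ᵐ ω ∂P,
      (m1 (X ω) - m0 (X ω) ≤ g11 (X ω) * p11 (X ω) + g01 (X ω) * p01 (X ω)) ∧
      (g11 (X ω) * p11 (X ω) + g01 (X ω) * p01 (X ω)
        ≤ m1 (X ω) - m0 (X ω) + mY20 (X ω) - Ymin) := by
  have hm : m𝓧.comap X ≤ ‹MeasurableSpace Ω› := hX.comap_le
  have p00 : ((0, 0) : ℝ × ℝ) ∈ allPaths := by simp [allPaths]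
  have pp01 : ((0, 1) : ℝ × ℝ) ∈ allPaths := by simp [allPaths]
  have p10 : ((1, 0) : ℝ × ℝ) ∈ allPaths := by simp [allPaths]
  have pp11 : ((1, 1) : ℝ × ℝ) ∈ allPaths := by simp [allPaths]
  have hA : ∀ e, MeasurableSet (evD D1 D2 e) := fun e =>
    (measurableSet_eq_fun hD1 measurable_const).inter (measurableSet_eq_fun hD2 measurable_const)
  have hA2 : ∀ b, MeasurableSet (evD2 D2 b) := fun b => measurableSet_eq_fun hD2 measurable_const
  have hA1 : ∀ b, MeasurableSet {ω | D1 ω = b} := fun b => measurableSet_eq_fun hD1 measurable_const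
  have indi : ∀ {A : Set Ω}, MeasurableSet A → Integrable (ind A) P := fun hA => by
    simpa using ind_int hA (integrable_const (1:ℝ))
  have cadd : ∀ a b : Ω → ℝ, Integrable a P → Integrable b P →
      P[fun ω => a ω + b ω | m𝓧.comap X] =ᵐ[P]
        fun ω => (P[a | m𝓧.comap X]) ω + (P[b | m𝓧.comap X]) ω :=
    fun a b ha hb => condExp_add ha hb _
  have csub : ∀ a b : Ω → ℝ, Integrable a P → Integrable b P →
      P[fun ω => a ω - b ω | m𝓧.comap X] =ᵐ[P]
        fun ω => (P[a | m𝓧.comap X]) ω - (P[b | m𝓧.comap X]) ω :=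
    fun a b ha hb => condExp_sub ha hb _
  have cuniv : P[ind (Set.univ : Set Ω) | m𝓧.comap X] = fun _ => (1:ℝ) := by
    have : ind (Set.univ : Set Ω) = fun _ => (1:ℝ) := by ext; simp [ind]
    rw [this, condExp_const hm]
  -- propensities
  have hq : ∀ e ∈ allPaths, ∀ᵐ ω ∂P, 0 < (P[ind (evD D1 D2 e) | m𝓧.comap X]) ω := by
    intro e he
    have k := key hX MeasurableSet.univ (indi (hA e)) (hpP e he)
    rw [cuniv] at k
    have : (fun ω => ind Set.univ ω * ind (evD D1 D2 e) ω) = ind (evD D1 D2 e) := by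
      ext; simp [ind]
    rw [this] at k
    filter_upwards [k, hpPpos e he] with ω h1 h2
    rw [h1]; simpa using h2
  let q : ℝ × ℝ → Ω → ℝ := fun e => P[ind (evD D1 D2 e) | m𝓧.comap X]
  let U : ℝ × ℝ → Ω → ℝ := fun e => P[fun ω => ind (evD D1 D2 e) ω * Y2p e ω | m𝓧.comap X]
  let V : ℝ × ℝ → Ω → ℝ := fun e => P[fun ω => ind (evD D1 D2 e) ω * Y2p (0,0) ω | m𝓧.comap X]
  let W : ℝ × ℝ → Ω → ℝ := fun e => P[fun ω => ind (evD D1 D2 e) ω * Y0p e ω | m𝓧.comap X]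
  let R : ℝ × ℝ → Ω → ℝ := fun e => P[fun ω => ind (evD D1 D2 e) ω * Y0p (0,0) ω | m𝓧.comap X]
  have iU : ∀ e ∈ allPaths, Integrable (fun ω => ind (evD D1 D2 e) ω * Y2p e ω) P :=
    fun e he => ind_int (hA e) (hY2p e he).2
  have iV : ∀ e, Integrable (fun ω => ind (evD D1 D2 e) ω * Y2p (0,0) ω) P :=
    fun e => ind_int (hA e) (hY2p _ p00).2
  have iW : ∀ e ∈ allPaths, Integrable (fun ω => ind (evD D1 D2 e) ω * Y0p e ω) P :=
    fun e he => ind_int (hA e) (hY0p e he).2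
  have iR : ∀ e, Integrable (fun ω => ind (evD D1 D2 e) ω * Y0p (0,0) ω) P :=
    fun e => ind_int (hA e) (hY0p _ p00).2
  have iT : Integrable (fun ω => Y2p (0,0) ω - Y0p (0,0) ω) P :=
    (hY2p _ p00).2.sub (hY0p _ p00).2
  -- effects
  have hG : ∀ e ∈ allPaths, ∀ g : 𝓧 → ℝ,
      IsCondMeanGiven P X (evD D1 D2 e) (fun ω => Y2p e ω - Y2p (0, 0) ω) g →
      ∀ᵐ ω ∂P, U e ω - V e ω = q e ω * g (X ω) := by
    intro e he g hg
    have k := key hX (hA e) ((hY2p e he).2.sub (hY2p _ p00).2) hg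
    filter_upwards [k, csub _ _ (iU e he) (iV e)] with ω h1 h2
    simp only [← mul_sub] at h2
    exact h2.symm.trans h1
  -- total trend
  let T : Ω → ℝ := P[fun ω => Y2p (0,0) ω - Y0p (0,0) ω | m𝓧.comap X]
  have hVR : ∀ e, ∀ᵐ ω ∂P,
      (P[fun ω => ind (evD D1 D2 e) ω * (Y2p (0,0) ω - Y0p (0,0) ω) | m𝓧.comap X]) ω
        = V e ω - R e ω := by
    intro e
    filter_upwards [csub _ _ (iV e) (iR e)] with ω h2
    simp only [← mul_sub] at h2
    exact h2
  have hD : ∀ d ∈ threePaths, d ∈ allPaths → ∀ᵐ ω ∂P,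
      W d ω = R d ω ∧ V d ω - R d ω = q d ω * T ω := by
    intro d hd hd'
    obtain ⟨h1, tr, h2, h3⟩ := hDID d hd
    have k1 := congr_cond hX (iW d hd') (iR d) h1
    have k2 := key hX MeasurableSet.univ iT h2
    have k3 := key hX (hA d) iT h3
    rw [cuniv] at k2
    have e1 : (fun ω => ind Set.univ ω * (Y2p (0,0) ω - Y0p (0,0) ω))
        = fun ω => Y2p (0,0) ω - Y0p (0,0) ω := by ext; simp [ind]
    rw [e1] at k2
    filter_upwards [k1, k2, k3, hVR d] with ω a1 a2 a3 a4
    refine ⟨a1, ?_⟩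
    have a2' : T ω = tr (X ω) := by simpa using a2
    rw [← a4, a2']; exact a3
  -- sums
  have hT : ∀ᵐ ω ∂P, T ω = ((V (0,0) ω - R (0,0) ω) + (V (0,1) ω - R (0,1) ω))
      + ((V (1,0) ω - R (1,0) ω) + (V (1,1) ω - R (1,1) ω)) := by
    have iI := fun e => ind_int (hA e) iT
    have e1 : (fun ω => Y2p (0,0) ω - Y0p (0,0) ω) = fun ω =>
        (ind (evD D1 D2 (0,0)) ω * (Y2p (0,0) ω - Y0p (0,0) ω)
          + ind (evD D1 D2 (0,1)) ω * (Y2p (0,0) ω - Y0p (0,0) ω))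
        + (ind (evD D1 D2 (1,0)) ω * (Y2p (0,0) ω - Y0p (0,0) ω)
          + ind (evD D1 D2 (1,1)) ω * (Y2p (0,0) ω - Y0p (0,0) ω)) := by
      ext ω
      rcases hD1v ω with h1 | h1 <;> rcases hD2v ω with h2 | h2 <;> simp [ind, evD, h1, h2]
    have k := cadd _ _ ((iI (0,0)).add (iI (0,1))) ((iI (1,0)).add (iI (1,1)))
    filter_upwards [k, cadd _ _ (iI (0,0)) (iI (0,1)), cadd _ _ (iI (1,0)) (iI (1,1)),
      hVR (0,0), hVR (0,1), hVR (1,0), hVR (1,1)] with ω b1 b2 b3 b4 b5 b6 b7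
    rw [← b4, ← b5, ← b6, ← b7, ← b2, ← b3]
    simp only [T]
    rw [e1]
    exact b1
  have hq1 : ∀ᵐ ω ∂P, 1 = (q (0,0) ω + q (0,1) ω) + (q (1,0) ω + q (1,1) ω) := by
    have iI := fun e => indi (hA e)
    have e1 : ind (Set.univ : Set Ω) = fun ω =>
        (ind (evD D1 D2 (0,0)) ω + ind (evD D1 D2 (0,1)) ω)
        + (ind (evD D1 D2 (1,0)) ω + ind (evD D1 D2 (1,1)) ω) := by
      ext ω
      rcases hD1v ω with h1 | h1 <;> rcases hD2v ω with h2 | h2 <;> simp [ind, evD, h1, h2]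
    have k := cadd _ _ ((iI (0,0)).add (iI (0,1))) ((iI (1,0)).add (iI (1,1)))
    have c := cuniv
    rw [e1] at c
    filter_upwards [k, cadd _ _ (iI (0,0)) (iI (0,1)), cadd _ _ (iI (1,0)) (iI (1,1))]
      with ω b1 b2 b3
    simp only [q]
    rw [← b2, ← b3]
    refine Eq.trans ?_ b1
    exact (congrFun c ω).symm
  have hqb : ∀ b : ℝ, ∀ᵐ ω ∂P,
      (P[ind (evD2 D2 b) | m𝓧.comap X]) ω = q (0,b) ω + q (1,b) ω := by
    intro b
    have e1 : ind (evD2 D2 b) = fun ω => ind (evD D1 D2 (0,b)) ω + ind (evD D1 D2 (1,b)) ω := by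
      ext ω
      rcases hD1v ω with h1 | h1 <;> by_cases h2 : D2 ω = b <;> simp [ind, evD, evD2, h1, h2]
    rw [e1]
    exact cadd _ _ (indi (hA _)) (indi (hA _))
  have hYb : ∀ b : ℝ, (0, b) ∈ allPaths → (1, b) ∈ allPaths → ∀ᵐ ω ∂P,
      (P[fun ω => ind (evD2 D2 b) ω * Y2 ω | m𝓧.comap X]) ω = U (0,b) ω + U (1,b) ω := by
    intro b hb0 hb1
    have e1 : (fun ω => ind (evD2 D2 b) ω * Y2 ω) = fun ω =>
        ind (evD D1 D2 (0,b)) ω * Y2p (0,b) ω + ind (evD D1 D2 (1,b)) ω * Y2p (1,b) ω := by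
      ext ω
      rcases hD1v ω with h1 | h1 <;> by_cases h2 : D2 ω = b <;>
        simp [ind, evD, evD2, h1, h2, hcons2]
    rw [e1]
    exact cadd _ _ (iU _ hb0) (iU _ hb1)
  have hY0b : ∀ b : ℝ, (0, b) ∈ allPaths → (1, b) ∈ allPaths → ∀ᵐ ω ∂P,
      (P[fun ω => ind (evD2 D2 b) ω * Y0 ω | m𝓧.comap X]) ω = W (0,b) ω + W (1,b) ω := by
    intro b hb0 hb1
    have e1 : (fun ω => ind (evD2 D2 b) ω * Y0 ω) = fun ω =>
        ind (evD D1 D2 (0,b)) ω * Y0p (0,b) ω + ind (evD D1 D2 (1,b)) ω * Y0p (1,b) ω := by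
      ext ω
      rcases hD1v ω with h1 | h1 <;> by_cases h2 : D2 ω = b <;>
        simp [ind, evD, evD2, h1, h2, hcons0]
    rw [e1]
    exact cadd _ _ (iW _ hb0) (iW _ hb1)
  have hM : ∀ b : ℝ, (0, b) ∈ allPaths → (1, b) ∈ allPaths → ∀ mm : 𝓧 → ℝ,
      IsCondMeanGiven P X (evD2 D2 b) (fun ω => Y2 ω - Y0 ω) mm → ∀ᵐ ω ∂P,
      (U (0,b) ω + U (1,b) ω) - (W (0,b) ω + W (1,b) ω)
        = (q (0,b) ω + q (1,b) ω) * mm (X ω) := by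
    intro b hb0 hb1 mm hmm
    have k := key hX (hA2 b) (hY2i.sub hY0i) hmm
    filter_upwards [k, csub _ _ (ind_int (hA2 b) hY2i) (ind_int (hA2 b) hY0i),
      hYb b hb0 hb1, hY0b b hb0 hb1, hqb b] with ω a1 a2 a3 a4 a5
    simp only [← mul_sub] at a2
    rw [← a3, ← a4, ← a5, ← a2]; exact a1
  have hp : ∀ a : ℝ, ∀ p : 𝓧 → ℝ,
      IsCondMeanGiven P X (evD2 D2 1) (ind {ω | D1 ω = a}) p → ∀ᵐ ω ∂P,
      q (a,1) ω = (q (0,1) ω + q (1,1) ω) * p (X ω) := by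
    intro a p hpp
    have k := key hX (hA2 1) (indi (hA1 a)) hpp
    have e1 : (fun ω => ind (evD2 D2 1) ω * ind {ω | D1 ω = a} ω) = ind (evD D1 D2 (a,1)) := by
      ext ω
      by_cases h1 : D1 ω = a <;> by_cases h2 : D2 ω = 1 <;> simp [ind, evD, evD2, h1, h2]
    rw [e1] at k
    filter_upwards [k, hqb 1] with ω a1 a2
    rw [← a2]; exact a1
  have hMY : ∀ᵐ ω ∂P, U (0,0) ω + U (1,0) ω = (q (0,0) ω + q (1,0) ω) * mY20 (X ω) := by
    have k := key hX (hA2 0) hY2i hmY20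
    filter_upwards [k, hYb 0 p00 p10, hqb 0] with ω a1 a2 a3
    rw [← a2, ← a3]; exact a1
  have hV : ∀ e, ∀ᵐ ω ∂P, Ymin * q e ω ≤ V e ω := by
    intro e
    have k : P[fun ω => Ymin * ind (evD D1 D2 e) ω | m𝓧.comap X] =ᵐ[P]
        fun ω => Ymin * q e ω := condExp_smul Ymin (ind (evD D1 D2 e)) _
    have k2 : P[fun ω => Ymin * ind (evD D1 D2 e) ω | m𝓧.comap X] ≤ᵐ[P] V e := by
      refine condExp_mono ((indi (hA e)).const_mul _) (iV e) ?_
      filter_upwards [hYmin _ p00] with ω hω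
      have := ind_nonneg (evD D1 D2 e) ω
      show Ymin * _ ≤ _ * _
      nlinarith
    filter_upwards [k, k2] with ω a1 a2
    rw [← a1]; exact a2
  have t11 : ((1, 1) : ℝ × ℝ) ∈ threePaths := by simp [threePaths]
  have t01 : ((0, 1) : ℝ × ℝ) ∈ threePaths := by simp [threePaths]
  have t10 : ((1, 0) : ℝ × ℝ) ∈ threePaths := by simp [threePaths]
  filter_upwards [hq _ p00, hq _ pp01, hq _ p10, hq _ pp11, hG _ pp11 _ hg11, hG _ pp01 _ hg01,
    hG _ p10 _ hg10, hD _ t11 pp11, hD _ t01 pp01, hD _ t10 p10, hT, hq1, hM 1 pp01 pp11 _ hm1,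
    hM 0 p00 p10 _ hm0, hp 1 _ hp11, hp 0 _ hp01, hMY, hV (0,0), hV (1,0), hMTR]
    with ω q00 q01 q10 q11 G11 G01 G10 D11 D01 D10 hTω hqω M1 M0 P1 P0 MY V00 V10 mtr
  have UV : U (0,0) ω = V (0,0) ω := rfl
  have WR : W (0,0) ω = R (0,0) ω := rfl
  change 0 < q _ ω at q00 q01 q10 q11
  generalize q (0,0) ω = a00, q (0,1) ω = a01, q (1,0) ω = a10, q (1,1) ω = a11,
    U (0,0) ω = u00, U (0,1) ω = u01, U (1,0) ω = u10, U (1,1) ω = u11,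
    V (0,0) ω = v00, V (0,1) ω = v01, V (1,0) ω = v10, V (1,1) ω = v11,
    W (0,0) ω = w00, W (0,1) ω = w01, W (1,0) ω = w10, W (1,1) ω = w11,
    R (0,0) ω = r00, R (0,1) ω = r01, R (1,0) ω = r10, R (1,1) ω = r11, T ω = t,
    g11 (X ω) = γ11, g01 (X ω) = γ01, g10 (X ω) = γ10, m1 (X ω) = μ1, m0 (X ω) = μ0,
    p11 (X ω) = π1, p01 (X ω) = π0, mY20 (X ω) = y at *
  obtain ⟨D11a, D11b⟩ := D11
  obtain ⟨D01a, D01b⟩ := D01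
  obtain ⟨D10a, D10b⟩ := D10
  subst UV WR D11a D01a D10a
  have e1 : μ1 = γ11 * π1 + γ01 * π0 + t := by
    have : 0 < a01 + a11 := by linarith
    apply mul_left_cancel₀ this.ne'
    linear_combination (-1 : ℝ) * M1 + G11 + G01 + D11b + D01b + γ11 * P1 + γ01 * P0
  have e0 : (a00 + a10) * (μ0 - t) = a10 * γ10 := by
    linear_combination (-1 : ℝ) * M0 + G10 - hTω + t * hqω - D11b - D01b
  have s : 0 < a00 + a10 := by linarith
  have h1 : 0 ≤ μ0 - t := by
    by_contra hc
    push Not at hc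
    nlinarith [mul_nonneg q10.le mtr]
  have h2 : μ0 - t ≤ y - Ymin := by
    refine le_of_mul_le_mul_left ?_ s
    nlinarith
  constructor <;> linarith

end DIDMissing
end
end

section
/- (Conditional ATT representation of the outcome-mean contrast.) Fix d in {(1,1),(0,1),(1,0)} and d' = (0,0), with P(D = d | X) > 0 and P(D = d' | X) > 0 a.s. Suppose the no-anticipation condition E[Y0(d) | D = d, X] = E[Y0(d') | D = d, X] a.s. holds, and the parallel-trends condition E[Y2(d') − Y0(d') | D = e, X] = E[Y2(d') − Y0(d') | X] a.s. holds for e = d and for e = d'. Then m_d(X) − m_{d'}(X) = E[Y2(d) − Y2(d') | D = d, X] a.s. -/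
open MeasureTheory Set
open scoped Classical

noncomputable section

namespace DIDMissing

variable {Ω : Type*} {𝓧 : Type*}

lemma aux_int [MeasurableSpace Ω] [MeasurableSpace 𝓧]
    (P : Measure Ω) (X : Ω → 𝓧) (hX : Measurable X) (A : Set Ω) (hA : MeasurableSet A)
    (Z : Ω → ℝ) (hZ : Integrable Z P) (h : 𝓧 → ℝ) (hh : Measurable h)
    (hb : ∃ C, ∀ x, |h x| ≤ C) :
    Integrable (fun ω => ind A ω * Z ω * h (X ω)) P := by
  obtain ⟨C, hC⟩ := hb
  have h1 : Integrable (fun ω => ind A ω * Z ω) P := by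
    have : (fun ω => ind A ω * Z ω) = A.indicator Z := by
      funext ω
      by_cases hω : ω ∈ A <;> simp [ind, hω]
    rw [this]
    exact hZ.indicator hA
  exact h1.mul_bdd (c := C) (hh.comp hX).aestronglyMeasurable
    (Filter.Eventually.of_forall fun ω => by simpa using hC (X ω))

lemma aux_add [MeasurableSpace Ω] [MeasurableSpace 𝓧]
    (P : Measure Ω) [IsProbabilityMeasure P] (X : Ω → 𝓧) (hX : Measurable X)
    (A : Set Ω) (hA : MeasurableSet A) (Z1 Z2 Z3 : Ω → ℝ) (g1 g2 g3 : 𝓧 → ℝ)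
    (h1 : IsCondMeanGiven P X A Z1 g1) (h2 : IsCondMeanGiven P X A Z2 g2)
    (h3 : IsCondMeanGiven P X A Z3 g3)
    (hZ : ∀ h : 𝓧 → ℝ, Measurable h → (∃ C, ∀ x, |h x| ≤ C) →
      ∫ ω, ind A ω * Z1 ω * h (X ω) ∂P =
        ∫ ω, ind A ω * Z2 ω * h (X ω) ∂P + ∫ ω, ind A ω * Z3 ω * h (X ω) ∂P) :
    ∀ᵐ ω ∂P, ω ∈ A → g1 (X ω) = g2 (X ω) + g3 (X ω) := by
  obtain ⟨m1, e1⟩ := h1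
  obtain ⟨m2, e2⟩ := h2
  obtain ⟨m3, e3⟩ := h3
  have key : ∀ n : ℕ, ∀ᵐ ω ∂P, ω ∈ A → |g1 (X ω)| ≤ n → |g2 (X ω)| ≤ n → |g3 (X ω)| ≤ n →
      g1 (X ω) = g2 (X ω) + g3 (X ω) := by
    intro n
    let S : Set 𝓧 := {x | |g1 x| ≤ n} ∩ ({x | |g2 x| ≤ n} ∩ {x | |g3 x| ≤ n})
    have hS : MeasurableSet S :=
      (measurableSet_le m1.abs measurable_const).inter
        ((measurableSet_le m2.abs measurable_const).inter
          (measurableSet_le m3.abs measurable_const))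
    let h : 𝓧 → ℝ := S.indicator fun x => g1 x - g2 x - g3 x
    have hh : Measurable h := ((m1.sub m2).sub m3).indicator hS
    have hb : ∃ C, ∀ x, |h x| ≤ C := by
      refine ⟨3 * n, fun x => ?_⟩
      by_cases hx : x ∈ S
      · obtain ⟨a, b, c⟩ := hx
        simp only [mem_ofPred_eq] at a b c
        have : h x = g1 x - g2 x - g3 x := indicator_of_mem (show x ∈ S from ⟨a, b, c⟩) _
        rw [this]
        rw [abs_le] at *
        constructor <;> linarith [a.1, a.2, b.1, b.2, c.1, c.2]
      · have : h x = 0 := indicator_of_notMem hx _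
        rw [this]; simp
    have red : ∀ f : 𝓧 → ℝ, Measurable f → (∀ x ∈ S, |f x| ≤ n) →
        Integrable (fun ω => ind A ω * f (X ω) * h (X ω)) P := by
      intro f hf hfb
      have hfi : Integrable (fun ω => S.indicator f (X ω)) P := by
        refine Integrable.of_bound ((hf.indicator hS).comp hX).aestronglyMeasurable (n : ℝ)
          (Filter.Eventually.of_forall fun ω => ?_)
        by_cases hx : X ω ∈ S
        · simpa [hx] using hfb _ hx
        · simp [hx]
      have := aux_int P X hX A hA _ hfi h hh hb
      refine this.congr (Filter.Eventually.of_forall fun ω => ?_)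
      by_cases hx : X ω ∈ S <;> simp [h, hx]
    have i1 := red g1 m1 fun x hx => hx.1
    have i2 := red g2 m2 fun x hx => hx.2.1
    have i3 := red g3 m3 fun x hx => hx.2.2
    have e := hZ h hh hb
    rw [e1 h hh hb, e2 h hh hb, e3 h hh hb, ← integral_add i2 i3] at e
    have i23 : Integrable (fun ω => ind A ω * g2 (X ω) * h (X ω) +
        ind A ω * g3 (X ω) * h (X ω)) P := i2.add i3
    have e' : ∫ ω, (ind A ω * g1 (X ω) * h (X ω) -
        (ind A ω * g2 (X ω) * h (X ω) + ind A ω * g3 (X ω) * h (X ω))) ∂P = 0 := by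
      rw [integral_sub i1 i23, e]
      exact sub_self _
    have hpt : ∀ ω, ind A ω * g1 (X ω) * h (X ω) -
        (ind A ω * g2 (X ω) * h (X ω) + ind A ω * g3 (X ω) * h (X ω)) =
        ind A ω * (h (X ω)) ^ 2 := by
      intro ω
      by_cases hx : X ω ∈ S
      · simp only [h, indicator_of_mem hx]; ring
      · simp [h, hx]
    simp only [hpt] at e'
    have hi : Integrable (fun ω => ind A ω * (h (X ω)) ^ 2) P :=
      (i1.sub i23).congr (Filter.Eventually.of_forall hpt)
    have hz := (integral_eq_zero_iff_of_nonneg (fun ω => by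
      exact mul_nonneg (indicator_nonneg (fun _ _ => zero_le_one) _) (sq_nonneg _)) hi).1 e'
    filter_upwards [hz] with ω hω hA a b c
    have hx : X ω ∈ S := ⟨a, b, c⟩
    simp [ind, hA, h, hx] at hω
    linarith
  filter_upwards [ae_all_iff.2 key] with ω hω hA
  obtain ⟨n, hn⟩ := exists_nat_ge (max |g1 (X ω)| (max |g2 (X ω)| |g3 (X ω)|))
  simp only [max_le_iff] at hn
  exact hω n hA hn.1 hn.2.1 hn.2.2

lemma aux_zero [MeasurableSpace Ω] [MeasurableSpace 𝓧] (P : Measure Ω) (X : Ω → 𝓧)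
    (A : Set Ω) : IsCondMeanGiven P X A (fun _ => 0) (fun _ => 0) :=
  ⟨measurable_const, fun _ _ _ => by simp⟩

lemma aux_pos [MeasurableSpace Ω] [MeasurableSpace 𝓧]
    (P : Measure Ω) [IsProbabilityMeasure P] (X : Ω → 𝓧) (hX : Measurable X)
    (A : Set Ω) (p : 𝓧 → ℝ)
    (hp : IsCondMeanGiven P X Set.univ (ind A) p) (hpos : ∀ᵐ ω ∂P, 0 < p (X ω))
    (u v : 𝓧 → ℝ) (hu : Measurable u) (hv : Measurable v)
    (h0 : ∀ᵐ ω ∂P, ω ∈ A → u (X ω) = v (X ω)) : ∀ᵐ ω ∂P, u (X ω) = v (X ω) := by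
  obtain ⟨mp, ep⟩ := hp
  have key : ∀ n : ℕ, ∀ᵐ ω ∂P, |p (X ω)| ≤ n → u (X ω) = v (X ω) := by
    intro n
    let S : Set 𝓧 := {x | |p x| ≤ n} ∩ {x | u x = v x}ᶜ
    have hS : MeasurableSet S :=
      (measurableSet_le mp.abs measurable_const).inter (measurableSet_eq_fun hu hv).compl
    let h : 𝓧 → ℝ := S.indicator fun _ => 1
    have hh : Measurable h := measurable_const.indicator hS
    have hb : ∃ C, ∀ x, |h x| ≤ C := ⟨1, fun x => by
      by_cases hx : x ∈ S <;> simp [h, hx]⟩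
    have e := ep h hh hb
    have hl : ∫ ω, ind Set.univ ω * ind A ω * h (X ω) ∂P = 0 := by
      apply integral_eq_zero_of_ae
      filter_upwards [h0] with ω hω
      by_cases hA : ω ∈ A
      · have : X ω ∉ S := fun hx => hx.2 (hω hA)
        simp [h, this]
      · simp [ind, hA]
    rw [hl] at e
    have hi : Integrable (fun ω => ind Set.univ ω * p (X ω) * h (X ω)) P := by
      have : Integrable (fun ω => S.indicator p (X ω)) P := by
        refine Integrable.of_bound ((mp.indicator hS).comp hX).aestronglyMeasurable (n : ℝ)
          (Filter.Eventually.of_forall fun ω => ?_)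
        by_cases hx : X ω ∈ S
        · simpa [hx] using hx.1
        · simp [hx]
      refine this.congr (Filter.Eventually.of_forall fun ω => ?_)
      by_cases hx : X ω ∈ S <;> simp [h, hx, ind]
    have hz := (integral_eq_zero_iff_of_nonneg_ae (by
      filter_upwards [hpos] with ω hω
      by_cases hx : X ω ∈ S <;> simp [h, hx, ind, hω.le]) hi).1 e.symm
    filter_upwards [hz, hpos] with ω hω hpω hn
    by_contra hne
    have hx : X ω ∈ S := ⟨hn, hne⟩
    simp [h, hx, ind] at hω
    linarith
  filter_upwards [ae_all_iff.2 key] with ω hω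
  obtain ⟨n, hn⟩ := exists_nat_ge |p (X ω)|
  exact hω n hn

/-- Conditional ATT representation of the outcome-mean contrast:
`m_d(X) − m_{d'}(X) = E[Y₂(d) − Y₂(d') ∣ D = d, X]` a.s. -/
theorem statement_14
    [MeasurableSpace Ω] [m𝓧 : MeasurableSpace 𝓧]
    (P : Measure Ω) [IsProbabilityMeasure P]
    (X : Ω → 𝓧) (hX : Measurable X)
    (Y0 Y2 D1 D2 : Ω → ℝ)
    (hY0 : Measurable Y0) (hY2 : Measurable Y2)
    (hD1 : Measurable D1) (hD2 : Measurable D2)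
    (hY0i : Integrable Y0 P) (hY2i : Integrable Y2 P)
    (hD1v : ∀ ω, D1 ω = 0 ∨ D1 ω = 1) (hD2v : ∀ ω, D2 ω = 0 ∨ D2 ω = 1)
    (Y0p Y2p : ℝ × ℝ → Ω → ℝ)
    (hY0p : ∀ e ∈ allPaths, Measurable (Y0p e) ∧ Integrable (Y0p e) P)
    (hY2p : ∀ e ∈ allPaths, Measurable (Y2p e) ∧ Integrable (Y2p e) P)
    (hcons0 : ∀ ω, Y0 ω = Y0p (D1 ω, D2 ω) ω)
    (hcons2 : ∀ ω, Y2 ω = Y2p (D1 ω, D2 ω) ω)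
    (d : ℝ × ℝ) (hd : d ∈ threePaths)
    (pd pd' : 𝓧 → ℝ)
    (hpd : IsCondMeanGiven P X Set.univ (ind (evD D1 D2 d)) pd)
    (hpd' : IsCondMeanGiven P X Set.univ (ind (evD D1 D2 (0, 0))) pd')
    (hpdpos : ∀ᵐ ω ∂P, 0 < pd (X ω)) (hpd'pos : ∀ᵐ ω ∂P, 0 < pd' (X ω))
    (hNA : ∀ h : 𝓧 → ℝ, Measurable h → (∃ C, ∀ x, |h x| ≤ C) →
        ∫ ω, ind (evD D1 D2 d) ω * Y0p d ω * h (X ω) ∂P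
          = ∫ ω, ind (evD D1 D2 d) ω * Y0p (0, 0) ω * h (X ω) ∂P)
    (hPTd : ∃ tr : 𝓧 → ℝ,
        IsCondMeanGiven P X Set.univ (fun ω => Y2p (0, 0) ω - Y0p (0, 0) ω) tr ∧
        IsCondMeanGiven P X (evD D1 D2 d) (fun ω => Y2p (0, 0) ω - Y0p (0, 0) ω) tr)
    (hPTd' : ∃ tr : 𝓧 → ℝ,
        IsCondMeanGiven P X Set.univ (fun ω => Y2p (0, 0) ω - Y0p (0, 0) ω) tr ∧
        IsCondMeanGiven P X (evD D1 D2 (0, 0)) (fun ω => Y2p (0, 0) ω - Y0p (0, 0) ω) tr)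
    (md md' : 𝓧 → ℝ)
    (hmd : IsCondMeanGiven P X (evD D1 D2 d) (fun ω => Y2 ω - Y0 ω) md)
    (hmd' : IsCondMeanGiven P X (evD D1 D2 (0, 0)) (fun ω => Y2 ω - Y0 ω) md')
    (g : 𝓧 → ℝ)
    (hg : IsCondMeanGiven P X (evD D1 D2 d) (fun ω => Y2p d ω - Y2p (0, 0) ω) g) :
    ∀ᵐ ω ∂P, md (X ω) - md' (X ω) = g (X ω) := by
  have hmeas : ∀ e, MeasurableSet (evD D1 D2 e) := fun e =>
    (hD1 (measurableSet_singleton e.1)).inter (hD2 (measurableSet_singleton e.2))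
  have hd_all : d ∈ allPaths := by
    simp only [threePaths, allPaths, mem_insert_iff, mem_singleton_iff] at *
    tauto
  have h0_all : ((0, 0) : ℝ × ℝ) ∈ allPaths := by simp [allPaths]
  obtain ⟨tr, htru, htrd⟩ := hPTd
  obtain ⟨tr', htru', htrd'⟩ := hPTd'
  have E1 : ∀ᵐ ω ∂P, tr (X ω) = tr' (X ω) := by
    have := aux_add P X hX _ MeasurableSet.univ _ _ _ _ _ _ htru htru' (aux_zero P X _)
      (fun h _ _ => by simp)
    filter_upwards [this] with ω hω
    simpa using hω
  have E2 : ∀ᵐ ω ∂P, md' (X ω) = tr' (X ω) := by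
    refine aux_pos P X hX _ pd' hpd' hpd'pos _ _ hmd'.1 htru'.1 ?_
    have := aux_add P X hX _ (hmeas (0, 0)) _ _ _ _ _ _ hmd' htrd' (aux_zero P X _)
      (fun h _ _ => by
        simp only [mul_zero, zero_mul, integral_zero, add_zero]
        refine integral_congr_ae (Filter.Eventually.of_forall fun ω => ?_)
        by_cases hA : ω ∈ evD D1 D2 (0, 0)
        · have ⟨a, b⟩ := hA
          simp only at a b
          simp only [hcons0, hcons2, a, b]
        · simp [ind, hA])
    filter_upwards [this] with ω hω hA
    simpa using hω hA
  have E3 : ∀ᵐ ω ∂P, md (X ω) = g (X ω) + tr (X ω) := by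
    refine aux_pos P X hX _ pd hpd hpdpos _ (fun x => g x + tr x) hmd.1 (hg.1.add htru.1) ?_
    refine aux_add P X hX _ (hmeas d) _ _ _ _ _ _ hmd hg htrd ?_
    intro h hh hb
    have I := fun Z hZ => aux_int P X hX _ (hmeas d) Z hZ h hh hb
    have i2d := I _ (hY2p d hd_all).2
    have i20 := I _ (hY2p _ h0_all).2
    have i0d := I _ (hY0p d hd_all).2
    have i00 := I _ (hY0p _ h0_all).2
    have c : ∫ ω, ind (evD D1 D2 d) ω * (Y2 ω - Y0 ω) * h (X ω) ∂P =
        ∫ ω, (ind (evD D1 D2 d) ω * Y2p d ω * h (X ω) -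
          ind (evD D1 D2 d) ω * Y0p d ω * h (X ω)) ∂P := by
      refine integral_congr_ae (Filter.Eventually.of_forall fun ω => ?_)
      by_cases hA : ω ∈ evD D1 D2 d
      · have ⟨a, b⟩ := hA
        simp only [hcons0, hcons2, a, b]
        ring
      · simp [ind, hA]
    rw [c]
    simp only [mul_sub, sub_mul]
    rw [integral_sub i2d i0d, integral_sub i2d i20, integral_sub i20 i00, hNA h hh hb]
    ring
  filter_upwards [E1, E2, E3] with ω a b c
  rw [c, b, a]
  ring

end DIDMissing
end
end

section
/- (Vanishing of the adjustment term with a correct missing-data model.) Fix d2 in {0,1} with P(D2 = d2) > 0. Suppose Assumption MAR holds, let π_{d1|d2} be a measurable (0,1)-valued function of X, suppose the denominators E[π_{d1|d2}(X) · 1{D2 = d2}] and E[(S/q_{d2}(X)) · π_{d1|d2}(X) · 1{D2 = d2}] are finite and strictly positive, and define w3 = π_{d1|d2}(X) · 1{D2 = d2} / E[π_{d1|d2}(X) · 1{D2 = d2}] and w4 = (S/q_{d2}(X)) · π_{d1|d2}(X) · 1{D2 = d2} / E[(S/q_{d2}(X)) · π_{d1|d2}(X) · 1{D2 = d2}]. Then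 for every bounded measurable function g of X, E[(w3 − w4) · g(X)] = 0. -/
open MeasureTheory Set
open scoped Classical

noncomputable section

namespace DIDMissing

variable {Ω : Type*} {𝓧 : Type*}

/-- Numerator of the Hájek weight `w₁`. -/
def n1 (X : Ω → 𝓧) (D1 D2 S : Ω → ℝ) (φ2 : 𝓧 → ℝ) (d : ℝ × ℝ) : Ω → ℝ :=
  fun ω => S ω / φ2 (X ω) * ind (evD D1 D2 d) ω

/-- Numerator of the Hájek weight `w₂`. -/
def n2 (X : Ω → 𝓧) (D1 D2 S : Ω → ℝ) (φ0 πc πc' π2 π0 : 𝓧 → ℝ) : Ω → ℝ :=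
  fun ω => S ω / φ0 (X ω) * (πc (X ω) * π2 (X ω) / (πc' (X ω) * π0 (X ω)))
    * ind (evD D1 D2 (0, 0)) ω

/-- Numerator of the Hájek weight `w₃`. -/
def n3 (X : Ω → 𝓧) (D2 : Ω → ℝ) (πc : 𝓧 → ℝ) (d2 : ℝ) : Ω → ℝ :=
  fun ω => πc (X ω) * ind (evD2 D2 d2) ω

/-- Numerator of the Hájek weight `w₄`. -/
def n4 (X : Ω → 𝓧) (D2 S : Ω → ℝ) (φ2 πc : 𝓧 → ℝ) (d2 : ℝ) : Ω → ℝ :=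
  fun ω => S ω / φ2 (X ω) * πc (X ω) * ind (evD2 D2 d2) ω

/-- The robust estimand `τ^R_{d,(0,0)}`. -/
def tauR [MeasurableSpace Ω] (P : Measure Ω) (X : Ω → 𝓧) (D1 D2 S Y0 Y2 : Ω → ℝ)
    (d : ℝ × ℝ) (μd μd' πc πc' π2 π0 φ2 φ0 : 𝓧 → ℝ) : ℝ :=
  (∫ ω, (n1 X D1 D2 S φ2 d ω / ∫ ω', n1 X D1 D2 S φ2 d ω' ∂P
        - n2 X D1 D2 S φ0 πc πc' π2 π0 ω / ∫ ω', n2 X D1 D2 S φ0 πc πc' π2 π0 ω' ∂P)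
      * (Y2 ω - Y0 ω - μd' (X ω)) ∂P)
  + ∫ ω, (n3 X D2 πc d.2 ω / ∫ ω', n3 X D2 πc d.2 ω' ∂P
        - n4 X D2 S φ2 πc d.2 ω / ∫ ω', n4 X D2 S φ2 πc d.2 ω' ∂P)
      * (μd (X ω) - μd' (X ω)) ∂P

theorem key_aux
    [MeasurableSpace Ω] [MeasurableSpace 𝓧]
    (P : Measure Ω)
    (X : Ω → 𝓧) (hX : Measurable X) (D2 S : Ω → ℝ) (d2 : ℝ)
    (q : 𝓧 → ℝ) (hq : IsCondMeanGiven P X (evD2 D2 d2) S q)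
    (hqp : ∀ᵐ ω ∂P, 0 < q (X ω))
    (πc : 𝓧 → ℝ) (hπcm : Measurable πc) (hπcv : ∀ x, 0 < πc x ∧ πc x < 1)
    (hn3i : Integrable (n3 X D2 πc d2) P)
    (hn4i : Integrable (n4 X D2 S q πc d2) P)
    (g : 𝓧 → ℝ) (hg : Measurable g) (C : ℝ) (hC : ∀ x, |g x| ≤ C) :
    ∫ ω, n4 X D2 S q πc d2 ω * g (X ω) ∂P = ∫ ω, n3 X D2 πc d2 ω * g (X ω) ∂P := by
  obtain ⟨hqm, hq⟩ := hq
  let k : ℕ → 𝓧 → ℝ := fun n => {x | 1 / ((n : ℝ) + 1) < q x}.indicator fun _ => (1 : ℝ)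
  have hkm : ∀ n, Measurable (k n) := fun n =>
    measurable_const.indicator (measurableSet_lt measurable_const hqm)
  have hk1 : ∀ n x, |k n x| ≤ 1 := by
    intro n x
    simp only [k, Set.indicator_apply]
    split_ifs <;> simp
  have hklim : ∀ x, 0 < q x → ∀ᶠ n in Filter.atTop, k n x = 1 := by
    intro x hx
    have h := (tendsto_one_div_add_atTop_nhds_zero_nat (𝕜 := ℝ)).eventually (gt_mem_nhds hx)
    filter_upwards [h] with n hn
    exact Set.indicator_of_mem (show x ∈ {x | 1 / ((n : ℝ) + 1) < q x} from hn) _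
  have hlim : ∀ N : Ω → ℝ, Integrable N P →
      Filter.Tendsto (fun n => ∫ ω, N ω * g (X ω) * k n (X ω) ∂P) Filter.atTop
        (nhds (∫ ω, N ω * g (X ω) ∂P)) := by
    intro N hN
    refine tendsto_integral_of_dominated_convergence (fun ω => |N ω| * C) ?_ (hN.abs.mul_const C)
      ?_ ?_
    · intro n
      exact (hN.aestronglyMeasurable.mul (hg.comp hX).aestronglyMeasurable).mul
        ((hkm n).comp hX).aestronglyMeasurable
    · intro n
      refine Filter.Eventually.of_forall fun ω => ?_
      rw [Real.norm_eq_abs, abs_mul, abs_mul]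
      calc |N ω| * |g (X ω)| * |k n (X ω)| ≤ |N ω| * |g (X ω)| * 1 := by
            gcongr; exact hk1 _ _
        _ ≤ |N ω| * C := by rw [mul_one]; gcongr; exact hC _
    · filter_upwards [hqp] with ω hω
      refine tendsto_const_nhds.congr' ?_
      filter_upwards [hklim _ hω] with n hn
      rw [hn, mul_one]
  have heq : ∀ n, ∫ ω, n4 X D2 S q πc d2 ω * g (X ω) * k n (X ω) ∂P
      = ∫ ω, n3 X D2 πc d2 ω * g (X ω) * k n (X ω) ∂P := by
    intro n
    have h := hq (fun x => πc x / q x * g x * k n x)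
      (((hπcm.div hqm).mul hg).mul (hkm n)) ⟨((n : ℝ) + 1) * C, ?_⟩
    · convert h using 2
      · ext ω; simp only [n4]; ring
      · ext ω
        simp only [n3]
        by_cases hx : 1 / ((n : ℝ) + 1) < q (X ω)
        · have : q (X ω) ≠ 0 := (lt_trans (by positivity) hx).ne'
          field_simp
        · have : k n (X ω) = 0 := by simp only [k, Set.indicator_apply, Set.mem_setOf_eq, if_neg hx]
          simp [this]
    · intro x
      have hC0 : 0 ≤ C := (abs_nonneg _).trans (hC x)
      by_cases hx : 1 / ((n : ℝ) + 1) < q x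
      · have hp : 0 < q x := lt_trans (by positivity) hx
        have h1 : πc x / q x ≤ (n : ℝ) + 1 := by
          rw [div_le_iff₀ hp]
          rw [div_lt_iff₀ (by positivity)] at hx
          linarith [(hπcv x).2]
        have h2 : |πc x / q x| ≤ (n : ℝ) + 1 := by
          rwa [abs_of_pos (div_pos (hπcv x).1 hp)]
        rw [abs_mul, abs_mul]
        calc _ ≤ ((n : ℝ) + 1) * C * 1 := by
              gcongr
              · exact hC x
              · exact hk1 n x
          _ = _ := mul_one _
      · have : k n x = 0 := by simp only [k, Set.indicator_apply, Set.mem_setOf_eq, if_neg hx]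
        simp only [this, mul_zero, abs_zero]
        positivity
  have h4 := hlim _ hn4i
  simp only [heq] at h4
  exact tendsto_nhds_unique h4 (hlim _ hn3i)

/-- Vanishing of the adjustment term `E[(w₃ − w₄) · g(X)]` when the missing-data model
is correct. -/
theorem statement_18
    [MeasurableSpace Ω] [m𝓧 : MeasurableSpace 𝓧]
    (P : Measure Ω) [IsProbabilityMeasure P]
    (X : Ω → 𝓧) (hX : Measurable X)
    (Y0 Y2 D1 D2 S : Ω → ℝ)
    (hY0 : Measurable Y0) (hY2 : Measurable Y2)
    (hD1 : Measurable D1) (hD2 : Measurable D2) (hS : Measurable S)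
    (hY0i : Integrable Y0 P) (hY2i : Integrable Y2 P)
    (hD1v : ∀ ω, D1 ω = 0 ∨ D1 ω = 1) (hD2v : ∀ ω, D2 ω = 0 ∨ D2 ω = 1)
    (hSv : ∀ ω, S ω = 0 ∨ S ω = 1)
    (d2 : ℝ) (hd2 : d2 ∈ ({0, 1} : Set ℝ)) (hPd2 : 0 < P (evD2 D2 d2))
    (q : ℝ → 𝓧 → ℝ) (hMAR : MAR P X D1 D2 S Y0 Y2 q)
    (πc : 𝓧 → ℝ) (hπcm : Measurable πc) (hπcv : ∀ x, 0 < πc x ∧ πc x < 1)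
    (hn3i : Integrable (n3 X D2 πc d2) P)
    (hn3pos : 0 < ∫ ω, n3 X D2 πc d2 ω ∂P)
    (hn4i : Integrable (n4 X D2 S (q d2) πc d2) P)
    (hn4pos : 0 < ∫ ω, n4 X D2 S (q d2) πc d2 ω ∂P) :
    ∀ g : 𝓧 → ℝ, Measurable g → (∃ C, ∀ x, |g x| ≤ C) →
      ∫ ω, (n3 X D2 πc d2 ω / ∫ ω', n3 X D2 πc d2 ω' ∂P
            - n4 X D2 S (q d2) πc d2 ω / ∫ ω', n4 X D2 S (q d2) πc d2 ω' ∂P)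
          * g (X ω) ∂P = 0 := by
  intro g hg ⟨C, hC⟩
  have key := key_aux P X hX D2 S d2 (q d2) (hMAR.1 d2 hd2)
    ((hMAR.2.1 d2 hd2).mono fun ω h => h.1) πc hπcm hπcv hn3i hn4i
  have hden := key (fun _ => 1) measurable_const 1 (by simp)
  simp only [mul_one] at hden
  have hnum := key g hg C hC
  rw [hden]
  have hint : ∀ N : Ω → ℝ, Integrable N P → Integrable (fun ω => N ω * g (X ω)) P := by
    intro N hN
    exact hN.mul_bdd (c := C) (hg.comp hX).aestronglyMeasurable
      (Filter.Eventually.of_forall fun ω => hC _)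
  have hr : ∀ ω, (n3 X D2 πc d2 ω / ∫ ω', n3 X D2 πc d2 ω' ∂P
            - n4 X D2 S (q d2) πc d2 ω / ∫ ω', n3 X D2 πc d2 ω' ∂P) * g (X ω)
      = (n3 X D2 πc d2 ω * g (X ω) - n4 X D2 S (q d2) πc d2 ω * g (X ω))
        / ∫ ω', n3 X D2 πc d2 ω' ∂P := fun ω => by ring
  simp_rw [hr]
  rw [integral_div, integral_sub (hint _ hn3i) (hint _ hn4i), hnum, sub_self, zero_div]

end DIDMissing
end
end
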